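/- (Nehari–Schaefer fixed point theorem.) Assume conditions (a1), (a2), (a3), and the Leray–Schauder boundary condition: v ≠ λ·T₂(u,v) for all u ∈ K₁, all v ∈ X₂ with |v|₂ = R, and all λ ∈ (0,1). Then the operator (T₁, T₂) has a fixed point in K₁ × B_R, i.e. there exist u ∈ K₁ and v ∈ B_R with T₁(u,v) = u and T₂(u,v) = v. -/

import Mathlib

namespace NS
open Set Metric MeasureTheory

lemma det_pos {E : Type*} [NormedAddCommGroup E] [InnerProductSpace ℝ E] [FiniteDimensional ℝ E]
    (A : E →L[ℝ] E) (hA : ‖A‖ < 1) : 0 < ((1 : E →L[ℝ] E) + A).det := by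
  have hne : ∀ τ ∈ Icc (0:ℝ) 1, ((1 : E →L[ℝ] E) + τ • A).det ≠ 0 := by
    intro τ hτ
    have h1 : ‖-(τ • A)‖ < 1 := by
      rw [norm_neg, norm_smul, Real.norm_of_nonneg hτ.1]
      nlinarith [norm_nonneg A, hτ.2]
    have hu : IsUnit ((1 : E →L[ℝ] E) - (-(τ • A))) := isUnit_one_sub_of_norm_lt_one h1
    rw [sub_neg_eq_add] at hu
    have h2 : IsUnit ((((1 : E →L[ℝ] E) + τ • A : E →L[ℝ] E)) : E →ₗ[ℝ] E) :=
      hu.map (ContinuousLinearMap.toLinearMapRingHom : (E →L[ℝ] E) →+* (E →ₗ[ℝ] E))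
    exact (h2.map (LinearMap.det : (E →ₗ[ℝ] E) →* ℝ)).ne_zero
  have hc : ContinuousOn (fun τ : ℝ => ((1 : E →L[ℝ] E) + τ • A).det) (Icc 0 1) := by
    apply Continuous.continuousOn
    exact ContinuousLinearMap.continuous_det.comp (by fun_prop)
  by_contra hn
  push Not at hn
  have := intermediate_value_Icc' (zero_le_one) hc
  obtain ⟨τ, hτ, h0⟩ := this (show (0:ℝ) ∈ _ by
    constructor
    · simpa using hn
    · simp [ContinuousLinearMap.det])
  exact hne τ hτ h0

lemma det_interp {E : Type*} [NormedAddCommGroup E] [InnerProductSpace ℝ E]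
    [FiniteDimensional ℝ E] (t : ℕ → ℝ) (ht : Function.Injective t) :
    ∃ c : ℕ → ℝ, ∀ A : E →L[ℝ] E, ((1 : E →L[ℝ] E) + A).det =
      ∑ j ∈ Finset.range (Module.finrank ℝ E + 1), c j * ((1 : E →L[ℝ] E) + t j • A).det := by
  classical
  set n := Module.finrank ℝ E
  refine ⟨fun j => (Lagrange.basis (Finset.range (n+1)) t j).eval 1, fun A => ?_⟩
  let b := Module.finBasis ℝ E
  let B := LinearMap.toMatrix b b (A : E →ₗ[ℝ] E)
  let p : Polynomial ℝ := Matrix.det ((Polynomial.X : Polynomial ℝ) • B.map Polynomial.C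
    + (1 : Matrix _ _ ℝ).map Polynomial.C)
  have hp : ∀ τ : ℝ, p.eval τ = ((1 : E →L[ℝ] E) + τ • A).det := by
    intro τ
    rw [ContinuousLinearMap.det, ← LinearMap.det_toMatrix b]
    simp only [p]
    rw [← Polynomial.coe_evalRingHom, RingHom.map_det]
    congr 1
    ext i j
    simp [B, Matrix.one_apply, LinearMap.toMatrix_apply, Finsupp.single_apply, eq_comm,
      add_comm]
    split_ifs <;> simp [mul_comm]
  have hdeg : p.degree < (Finset.range (n+1)).card := by
    have := Polynomial.natDegree_det_X_add_C_le B 1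
    rw [Finset.card_range]
    refine lt_of_le_of_lt Polynomial.degree_le_natDegree ?_
    simp only [Fintype.card_fin] at this
    exact_mod_cast Nat.lt_succ_of_le this
  have h := Lagrange.eq_interpolate (ht.injOn (s := ↑(Finset.range (n+1)))) hdeg
  have h1 := hp 1
  rw [one_smul] at h1
  rw [← h1, h, Lagrange.interpolate_apply, Polynomial.eval_finsetSum]
  refine Finset.sum_congr rfl fun j _ => ?_
  rw [Polynomial.eval_mul, Polynomial.eval_C, hp, mul_comm]

lemma perturb_surj {E : Type*} [NormedAddCommGroup E] [CompleteSpace E] (k : E → E) (K : NNReal)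
    (hK : K < 1) (hk : LipschitzWith K k) : Function.Bijective (fun x => x + k x) := by
  constructor
  · intro x y hxy
    simp only at hxy
    have h1 := hk.dist_le_mul x y
    have h2 : dist x y = dist (k x) (k y) := by
      rw [dist_eq_norm, dist_eq_norm, ← norm_neg (x - y)]
      congr 1
      rw [neg_sub, sub_eq_sub_iff_add_eq_add, add_comm (k x) x, hxy]
    have h3 : (K:ℝ) < 1 := hK
    rw [← dist_eq_zero]
    nlinarith [dist_nonneg (x := x) (y := y)]
  · intro y
    have hc : ContractingWith K (fun x => y - k x) := by
      refine ⟨hK, LipschitzWith.of_dist_le_mul fun a b => ?_⟩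
      rw [dist_sub_left]
      exact hk.dist_le_mul a b
    have := hc.fixedPoint_isFixedPt
    refine ⟨hc.fixedPoint _, ?_⟩
    have h := this.eq
    simp only at h ⊢
    nth_rewrite 1 [← h]
    simp

lemma vol_eq {E : Type*} [NormedAddCommGroup E] [InnerProductSpace ℝ E] [FiniteDimensional ℝ E]
    [MeasurableSpace E] [BorelSpace E] (h : E → E)
    (hd : ∀ x ∈ closedBall (0:E) 1, ContDiffAt ℝ 1 h x) (h0 : ∀ x, ‖x‖ = 1 → h x = 0) :
    ∫ x in ball (0:E) 1, ((1 : E →L[ℝ] E) + fderiv ℝ h x).det =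
      (volume : Measure E).real (ball 0 1) := by
  have hfc : ContinuousOn (fderiv ℝ h) (closedBall (0:E) 1) := fun x hx =>
    ((hd x hx).continuousAt_fderiv (by norm_num)).continuousWithinAt
  obtain ⟨C, hC⟩ := (isCompact_closedBall (0:E) 1).exists_bound_of_continuousOn hfc
  set CC : NNReal := ⟨max C 1, by positivity⟩ with hCCd
  have hCCb : C ≤ CC := le_max_left _ _
  have hCC1 : (1:ℝ) ≤ CC := le_max_right _ _
  have hlip : LipschitzOnWith CC h (closedBall 0 1) :=
    (convex_closedBall (0:E) 1).lipschitzOnWith_of_nnnorm_fderiv_le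
      (fun x hx => (hd x hx).differentiableAt (by norm_num))
      (fun x hx => by
        rw [← NNReal.coe_le_coe]
        exact (hC x hx).trans hCCb)
  -- extension by zero
  let H : E → E := fun x => if ‖x‖ ≤ 1 then h x else 0
  have key : ∀ x y : E, ‖x‖ ≤ 1 → 1 < ‖y‖ → ‖h x‖ ≤ CC * dist x y := by
    intro x y hx hy
    have hc : ContinuousOn (fun τ : ℝ => ‖x + τ • (y - x)‖) (Icc 0 1) := by fun_prop
    obtain ⟨τ, hτ, h1⟩ := intermediate_value_Icc (zero_le_one) hc
      (show (1:ℝ) ∈ _ by constructor <;> simp [hx, hy.le])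
    simp only at h1
    have h2 := hlip.dist_le_mul x (by simpa using hx) (x + τ • (y - x)) (by simp [h1])
    rw [h0 _ h1, dist_zero_right] at h2
    refine h2.trans ?_
    gcongr
    rw [dist_self_add_right, norm_smul, Real.norm_of_nonneg hτ.1, dist_comm, dist_eq_norm]
    nlinarith [norm_nonneg (y - x), hτ.2]
  have hH : LipschitzWith CC H := by
    refine LipschitzWith.of_dist_le_mul fun x y => ?_
    by_cases hx : ‖x‖ ≤ 1 <;> by_cases hy : ‖y‖ ≤ 1
    · simp only [H, hx, hy, if_true]
      exact hlip.dist_le_mul x (by simpa using hx) y (by simpa using hy)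
    · simp only [H, hx, hy, if_true, if_false, dist_zero_right]
      exact key x y hx (not_le.1 hy)
    · simp only [H, hx, hy, if_true, if_false, dist_zero_left]
      rw [dist_comm]
      exact key y x hy (not_le.1 hx)
    · simp only [H, hx, hy, if_false, dist_self]
      positivity
  have small : ∀ t : ℝ, 0 < t → t * CC < 1 →
      ∫ x in ball (0:E) 1, ((1 : E →L[ℝ] E) + t • fderiv ℝ h x).det =
      (volume : Measure E).real (ball 0 1) := by
    intro t ht htC
    let tN : NNReal := ⟨t, ht.le⟩
    have hk : LipschitzWith (tN * CC) (fun x => t • H x) := by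
      refine LipschitzWith.of_dist_le_mul fun x y => ?_
      rw [dist_smul₀, Real.norm_of_nonneg ht.le, NNReal.coe_mul, mul_assoc]
      exact mul_le_mul_of_nonneg_left (hH.dist_le_mul x y) ht.le
    have hb := perturb_surj (fun x => t • H x) (tN * CC) (by
      exact_mod_cast (show ((tN * CC : NNReal) : ℝ) < 1 from htC)) hk
    have hout : ∀ x, 1 ≤ ‖x‖ → H x = 0 := by
      intro x hx
      by_cases h1 : ‖x‖ ≤ 1
      · simp only [H, h1, if_true]; exact h0 x (le_antisymm h1 hx)
      · simp only [H, h1, if_false]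
    have himg : (fun x => x + t • H x) '' (ball 0 1) = ball (0:E) 1 := by
      ext y
      constructor
      · rintro ⟨x, hx, rfl⟩
        by_contra hy
        have hy1 : 1 ≤ ‖x + t • H x‖ := by simpa using hy
        have h2 := hb.1 (a₁ := x + t • H x) (a₂ := x) (by simp [hout _ hy1])
        exact hy (by simpa only [h2] using hx)
      · intro hy
        obtain ⟨x, rfl⟩ := hb.2 y
        refine ⟨x, ?_, rfl⟩
        by_contra hx
        have hx1 : 1 ≤ ‖x‖ := by simpa using hx
        simp only [hout x hx1, smul_zero, add_zero] at hy
        exact hx hy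
    have hder : ∀ x ∈ ball (0:E) 1, HasFDerivWithinAt (fun x => x + t • H x)
        ((1 : E →L[ℝ] E) + t • fderiv ℝ h x) (ball 0 1) x := by
      intro x hx
      have e1 : HasFDerivAt (fun x => x + t • h x) ((1 : E →L[ℝ] E) + t • fderiv ℝ h x) x :=
        (hasFDerivAt_id x).add
          (((hd x (ball_subset_closedBall hx)).differentiableAt (by norm_num)).hasFDerivAt.const_smul t)
      refine e1.hasFDerivWithinAt.congr (fun y hy => ?_) ?_
      · have : ‖y‖ ≤ 1 := by simpa using (ball_subset_closedBall hy)
        simp [H, this]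
      · have : ‖x‖ ≤ 1 := by simpa using (ball_subset_closedBall hx)
        simp [H, this]
    have cv := integral_image_eq_integral_abs_det_fderiv_smul (volume : Measure E)
      measurableSet_ball hder hb.1.injOn (fun _ => (1:ℝ))
    rw [himg] at cv
    simp only [smul_eq_mul, mul_one, integral_const, MeasurableSet.univ,
      measureReal_restrict_apply, univ_inter] at cv
    rw [cv]
    refine setIntegral_congr_fun measurableSet_ball fun x hx => ?_
    refine (abs_of_pos (det_pos _ ?_)).symm
    rw [norm_smul, Real.norm_of_nonneg ht.le]
    have := (hC x (ball_subset_closedBall hx)).trans hCCb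
    nlinarith
  have hCCp : (0:ℝ) < CC := by linarith
  let t : ℕ → ℝ := fun j => ((j + 2) * CC)⁻¹
  have htinj : Function.Injective t := by
    intro i j hij
    simp only [t] at hij
    have := mul_right_cancel₀ hCCp.ne' (inv_injective hij)
    exact_mod_cast add_right_cancel this
  have hts : ∀ j, 0 < t j ∧ t j * CC < 1 := by
    intro j
    refine ⟨by positivity, ?_⟩
    simp only [t]
    rw [mul_inv, mul_assoc, inv_mul_cancel₀ hCCp.ne', mul_one]
    apply inv_lt_one_of_one_lt₀
    have : (0:ℝ) ≤ j := by positivity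
    linarith
  obtain ⟨c, hc⟩ := det_interp (E := E) t htinj
  have hIntg : ∀ j, IntegrableOn (fun x => ((1 : E →L[ℝ] E) + t j • fderiv ℝ h x).det)
      (ball (0:E) 1) := by
    intro j
    refine (ContinuousOn.integrableOn_compact (isCompact_closedBall (0:E) 1) ?_).mono_set
      ball_subset_closedBall
    exact ContinuousLinearMap.continuous_det.comp_continuousOn
      (continuousOn_const.add (hfc.const_smul (t j)))
  rw [integral_congr_ae (Filter.Eventually.of_forall fun x => hc (fderiv ℝ h x))]
  rw [integral_finsetSum _ (fun j _ => (hIntg j).const_mul (c j))]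
  rw [Finset.sum_congr rfl fun j _ => by
    rw [integral_const_mul, small (t j) (hts j).1 (hts j).2]]
  rw [← Finset.sum_mul]
  have := hc 0
  simp only [smul_zero, add_zero] at this
  have h1 : (1 : E →L[ℝ] E).det = 1 := by simp [ContinuousLinearMap.det]
  simp only [h1, mul_one] at this
  rw [← this, one_mul]

lemma no_retraction {E : Type*} [NormedAddCommGroup E] [InnerProductSpace ℝ E]
    [FiniteDimensional ℝ E] (r : E → E)
    (hd : ∀ x ∈ closedBall (0:E) 1, ContDiffAt ℝ 1 r x) (h0 : ∀ x, ‖x‖ = 1 → r x = x)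
    (h1 : ∀ x, ‖x‖ ≤ 1 → ‖r x‖ = 1) : False := by
  let _ : MeasurableSpace E := borel E
  have _ : BorelSpace E := ⟨rfl⟩
  have hv := vol_eq (fun x => r x - x) (fun x hx => (hd x hx).sub contDiffAt_id)
    (fun x hx => by simp [h0 x hx])
  have hz : ∫ x in ball (0:E) 1, ((1 : E →L[ℝ] E) + fderiv ℝ (fun x => r x - x) x).det
      = ∫ x in ball (0:E) 1, (0:ℝ) := by
    refine setIntegral_congr_fun measurableSet_ball fun x hx => ?_
    have hdr := (hd x (ball_subset_closedBall hx)).differentiableAt (by norm_num)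
    have e : (1 : E →L[ℝ] E) + fderiv ℝ (fun x => r x - x) x = fderiv ℝ r x := by
      rw [fderiv_fun_sub hdr differentiableAt_fun_id, fderiv_fun_id]
      ext v; simp
    simp only [e]
    by_contra hne
    have hort : ∀ v, inner ℝ (r x) (fderiv ℝ r x v) = 0 := by
      intro v
      have e1 : HasFDerivAt (fun y => inner ℝ (r y) (r y)) _ x :=
        hdr.hasFDerivAt.inner ℝ hdr.hasFDerivAt
      have e2 : HasFDerivAt (fun y => inner ℝ (r y) (r y)) (0 : E →L[ℝ] ℝ) x := by
        refine (hasFDerivAt_const (1:ℝ) x).congr_of_eventuallyEq ?_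
        filter_upwards [isOpen_ball.mem_nhds hx] with y hy
        rw [real_inner_self_eq_norm_sq, h1 y (by simpa using (ball_subset_closedBall hy))]
        norm_num
      have := congrArg (fun L => L v) (e1.unique e2)
      simp [real_inner_comm] at this
      rw [real_inner_comm] 
      linarith [real_inner_comm (r x) (fderiv ℝ r x v)]
    have hu : IsUnit (LinearMap.det (fderiv ℝ r x : E →ₗ[ℝ] E)) := isUnit_iff_ne_zero.2 hne
    have hs : Function.Surjective (fderiv ℝ r x : E →ₗ[ℝ] E) :=
      LinearMap.range_eq_top.1 (((LinearMap.isUnit_iff_range_eq_top _).1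
        ((LinearMap.isUnit_iff_isUnit_det _).2 hu)))
    obtain ⟨v, hv⟩ := hs (r x)
    have := hort v
    have hv' : fderiv ℝ r x v = r x := hv
    rw [hv', real_inner_self_eq_norm_sq, h1 x (by simpa using (ball_subset_closedBall hx))] at this
    norm_num at this
  rw [hz, integral_zero] at hv
  have : 0 < (volume : Measure E).real (ball 0 1) :=
    ENNReal.toReal_pos (measure_ball_pos _ _ one_pos).ne' measure_ball_lt_top.ne
  linarith
lemma smooth_brouwer {E : Type*} [NormedAddCommGroup E] [InnerProductSpace ℝ E]
    [FiniteDimensional ℝ E] (f : E → E) (hf : ContDiff ℝ 1 f) (h1 : ∀ x, ‖f x‖ < 1) :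
    ∃ x, ‖x‖ ≤ 1 ∧ f x = x := by
  by_contra! hne
  let w : E → E := fun x => x - f x
  have hw0 : ∀ x, ‖x‖ ≤ 1 → w x ≠ 0 := fun x hx h => hne x hx (sub_eq_zero.1 h).symm
  let a : E → ℝ := fun x => inner ℝ x (w x)
  let D : E → ℝ := fun x => a x ^ 2 + ‖w x‖ ^ 2 * (1 - ‖x‖ ^ 2)
  have ha1 : ∀ x, ‖x‖ = 1 → 0 < a x := by
    intro x hx
    have : a x = 1 - inner ℝ x (f x) := by
      simp only [a, w, inner_sub_right, real_inner_self_eq_norm_sq, hx]; norm_num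
    have h2 := real_inner_le_norm x (f x)
    rw [hx, one_mul] at h2
    linarith [h1 x]
  have hD : ∀ x, ‖x‖ ≤ 1 → 0 < D x := by
    intro x hx
    have hwp : 0 < ‖w x‖ := norm_pos_iff.2 (hw0 x hx)
    rcases hx.lt_or_eq with h | h
    · have : 0 < 1 - ‖x‖ ^ 2 := by nlinarith [norm_nonneg x]
      have := mul_pos (pow_pos hwp 2) this
      simp only [D]; positivity
    · have := ha1 x h
      simp only [D, h]; norm_num; positivity
  let l : E → ℝ := fun x => (-a x + Real.sqrt (D x)) / ‖w x‖ ^ 2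
  have hwc : ContDiff ℝ 1 w := contDiff_id.sub hf
  have hac : ContDiff ℝ 1 a := contDiff_id.inner ℝ hwc
  have hDc : ContDiff ℝ 1 D :=
    (hac.pow 2).add ((hwc.norm_sq ℝ).mul (contDiff_const.sub (contDiff_id.norm_sq ℝ)))
  refine no_retraction (fun x => x + l x • w x) ?_ ?_ ?_
  · intro x hx
    have hx : ‖x‖ ≤ 1 := by simpa using hx
    have hlc : ContDiffAt ℝ 1 l x :=
      (hac.contDiffAt.neg.add (hDc.contDiffAt.sqrt (hD x hx).ne')).div
        (hwc.norm_sq ℝ).contDiffAt (pow_ne_zero 2 (norm_ne_zero_iff.2 (hw0 x hx)))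
    exact contDiffAt_id.add (hlc.smul hwc.contDiffAt)
  · intro x hx
    have : l x = 0 := by
      simp only [l, D, hx]
      norm_num
      left
      rw [Real.sqrt_sq (ha1 x hx).le]; ring
    simp [this]
  · intro x hx
    have hwp : ‖w x‖ ≠ 0 := norm_ne_zero_iff.2 (hw0 x hx)
    have hs := Real.sq_sqrt (hD x hx).le
    have e : ‖x + l x • w x‖ ^ 2 = 1 := by
      rw [norm_add_sq_real, inner_smul_right, norm_smul, mul_pow, Real.norm_eq_abs, sq_abs]
      change ‖x‖ ^ 2 + 2 * (l x * a x) + l x ^ 2 * ‖w x‖ ^ 2 = 1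
      have hl : l x * ‖w x‖ ^ 2 = -a x + Real.sqrt (D x) := by
        simp only [l]; field_simp
      have h3 : (l x * ‖w x‖ ^ 2 + a x) ^ 2 = D x := by rw [hl, neg_add_eq_sub, sub_add_cancel, hs]
      have h4 : ‖w x‖ ^ 2 * (‖x‖ ^ 2 + 2 * (l x * a x) + l x ^ 2 * ‖w x‖ ^ 2)
          = ‖w x‖ ^ 2 * 1 := by
        simp only [D] at h3
        linarith
      exact mul_left_cancel₀ (pow_ne_zero 2 hwp) h4
    nlinarith [norm_nonneg (x + l x • w x)]

lemma brouwer {E : Type*} [NormedAddCommGroup E] [InnerProductSpace ℝ E]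
    [FiniteDimensional ℝ E] (f : E → E) (hf : Continuous f) (h1 : ∀ x, ‖f x‖ ≤ 1) :
    ∃ x, f x = x := by
  by_contra! hne
  obtain ⟨x0, _, hx0⟩ := (isCompact_closedBall (0:E) 1).exists_isMinOn
    ⟨0, by simp⟩ (f := fun x => ‖f x - x‖) (by fun_prop)
  set δ := ‖f x0 - x0‖ with hδ
  have hδp : 0 < δ := norm_pos_iff.2 (sub_ne_zero.2 (hne x0))
  obtain ⟨g, hg, hgf, -⟩ := hf.exists_contDiff_approx 1 (ε := fun _ => δ / 4)
    continuous_const (fun _ => by positivity)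
  have hgn : ∀ x, ‖g x‖ < 1 + δ / 4 := by
    intro x
    have h2 := hgf x
    rw [dist_eq_norm] at h2
    have := norm_sub_norm_le (g x) (f x)
    linarith [h1 x]
  have hp : 0 < 1 + δ / 4 := by positivity
  obtain ⟨x, hx, hfx⟩ := smooth_brouwer (fun x => (1 + δ / 4)⁻¹ • g x)
    (contDiff_const.smul hg) (fun x => by
      rw [norm_smul, norm_inv, Real.norm_of_nonneg hp.le, inv_mul_lt_one₀ hp]
      exact hgn x)
  have hmin : δ ≤ ‖f x - x‖ := hx0 (by simpa using hx)
  have hgx : g x = (1 + δ / 4) • x := by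
    rw [← inv_smul_eq_iff₀ hp.ne']; exact hfx
  have h2 := hgf x
  rw [dist_eq_norm, hgx] at h2
  have h3 : ‖f x - x‖ ≤ ‖(1 + δ / 4) • x - f x‖ + ‖(δ / 4) • x‖ := by
    rw [norm_sub_rev ((1 + δ / 4) • x)]
    have : f x - x = (f x - (1 + δ / 4) • x) + (δ / 4) • x := by
      rw [add_smul, one_smul]; abel
    rw [this]
    refine (norm_add_le _ _).trans (le_of_eq ?_)
    rw [add_smul, one_smul]
  rw [norm_smul (δ / 4), Real.norm_of_nonneg (by positivity)] at h3
  nlinarith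

/-- The Schauder fixed point theorem, approximate form. -/
lemma schauder_approx {X : Type*} [NormedAddCommGroup X] [NormedSpace ℝ X]
    (C : Set X) (hC : Convex ℝ C) (hne : C.Nonempty) (Q : Set X) (hQ : IsCompact Q) (hQC : Q ⊆ C)
    (f : X → X) (hf : ContinuousOn f C) (hfQ : MapsTo f C Q) (ε : ℝ) (hε : 0 < ε) :
    ∃ x ∈ C, ‖f x - x‖ ≤ ε := by
  obtain ⟨S, hSQ, hSf, hcov⟩ := hQ.finite_cover_balls hε
  have := hSf.fintype
  let y : S → X := fun i => i.1
  have hyC : ∀ i, y i ∈ C := fun i => hQC (hSQ i.2)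
  have hpos0 : ∀ q ∈ Q, ∃ i : S, ‖q - y i‖ < ε := by
    intro q hq
    obtain ⟨i, hi, hqi⟩ := mem_iUnion₂.1 (hcov hq)
    exact ⟨⟨i, hi⟩, by simpa [dist_eq_norm] using hqi⟩
  obtain ⟨c0, hc0⟩ := hne
  have hNe : Nonempty S := ⟨(hpos0 _ (hfQ hc0)).choose⟩
  let N : ℝ := Fintype.card S
  have hN : 0 < N := by simp only [N]; exact_mod_cast Fintype.card_pos
  -- retraction on the simplex
  let Sm : EuclideanSpace ℝ S → ℝ := fun z => ∑ i, max (z i) 0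
  let ret : EuclideanSpace ℝ S → S → ℝ := fun z i => (max (z i) 0 + max 0 (1 - Sm z) / N) / max (Sm z) 1
  have hSc : Continuous Sm := by simp only [Sm]; fun_prop
  have hmp : ∀ z, 0 < max (Sm z) 1 := fun z => lt_max_of_lt_right one_pos
  have hret_c : ∀ i, Continuous (fun z => ret z i) := by
    intro i
    simp only [ret]
    refine Continuous.div (by fun_prop) (by fun_prop) (fun z => (hmp z).ne')
  have hret0 : ∀ z i, 0 ≤ ret z i := by
    intro z i
    have := hmp z
    simp only [ret]; positivity
  have hret1 : ∀ z, ∑ i, ret z i = 1 := by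
    intro z
    simp only [ret]
    rw [← Finset.sum_div, Finset.sum_add_distrib, Finset.sum_const, Finset.card_univ,
      nsmul_eq_mul, div_eq_one_iff_eq (hmp z).ne', mul_div_cancel₀ _ hN.ne']
    change Sm z + max 0 (1 - Sm z) = _
    rw [← max_add_add_left]; simp
  have hret_id : ∀ z : EuclideanSpace ℝ S, (∀ i, 0 ≤ z i) → ∑ i, z i = 1 → ∀ i, ret z i = z i := by
    intro z hz hz1 i
    have : Sm z = 1 := by
      simp only [Sm]; rw [← hz1]; exact Finset.sum_congr rfl fun i _ => max_eq_left (hz i)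
    simp only [ret, this]
    simp [hz i]
  let P : EuclideanSpace ℝ S → X := fun z => ∑ i, ret z i • y i
  have hPc : Continuous P := by
    simp only [P]
    exact continuous_finsetSum _ fun i _ => (hret_c i).smul continuous_const
  have hPC : ∀ z, P z ∈ C := fun z =>
    hC.sum_mem (fun i _ => hret0 z i) (hret1 z) (fun i _ => hyC i)
  let G : EuclideanSpace ℝ S → X := fun z => f (P z)
  have hGc : Continuous G := hf.comp_continuous hPc hPC
  have hGQ : ∀ z, G z ∈ Q := fun z => hfQ (hPC z)
  let φ : S → EuclideanSpace ℝ S → ℝ := fun i z => max 0 (ε - ‖G z - y i‖)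
  have hφc : ∀ i, Continuous (φ i) := by intro i; simp only [φ]; fun_prop
  have hφ0 : ∀ i z, 0 ≤ φ i z := fun i z => le_max_left _ _
  let Φ : EuclideanSpace ℝ S → ℝ := fun z => ∑ i, φ i z
  have hΦc : Continuous Φ := continuous_finsetSum _ fun i _ => hφc i
  have hΦp : ∀ z, 0 < Φ z := by
    intro z
    obtain ⟨i, hi⟩ := hpos0 _ (hGQ z)
    refine Finset.sum_pos' (fun i _ => hφ0 i z) ⟨i, Finset.mem_univ _, ?_⟩
    exact lt_max_of_lt_right (by linarith)
  let T : EuclideanSpace ℝ S → EuclideanSpace ℝ S := fun z => WithLp.toLp 2 (fun i => φ i z / Φ z)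
  have hTc : Continuous T := by
    refine (PiLp.continuous_toLp 2 _).comp (continuous_pi fun i => ?_)
    exact (hφc i).div hΦc (fun z => (hΦp z).ne')
  have hT0 : ∀ z i, 0 ≤ T z i := fun z i => div_nonneg (hφ0 i z) (hΦp z).le
  have hT1 : ∀ z, ∑ i, T z i = 1 := by
    intro z
    simp only [T]
    rw [← Finset.sum_div]
    exact div_self (hΦp z).ne'
  have hTn : ∀ z, ‖T z‖ ≤ 1 := by
    intro z
    rw [EuclideanSpace.norm_eq]
    refine Real.sqrt_le_one.2 ?_
    rw [← hT1 z]
    refine Finset.sum_le_sum fun i _ => ?_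
    rw [Real.norm_of_nonneg (hT0 z i)]
    have : T z i ≤ 1 := by
      rw [← hT1 z]; exact Finset.single_le_sum (fun i _ => hT0 z i) (Finset.mem_univ i)
    nlinarith [hT0 z i]
  obtain ⟨z, hz⟩ := brouwer T hTc hTn
  have hretz : ∀ i, ret z i = T z i := by
    intro i
    rw [hret_id z (fun i => by rw [← hz]; exact hT0 z i) (by rw [← hz]; exact hT1 z), hz]
  refine ⟨P z, hPC z, ?_⟩
  have e : f (P z) - P z = ∑ i, T z i • (G z - y i) := by
    simp only [smul_sub, Finset.sum_sub_distrib]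
    rw [← Finset.sum_smul, hT1, one_smul]
    simp only [P, G, hretz]
  rw [e]
  refine (norm_sum_le _ _).trans ?_
  calc ∑ i, ‖T z i • (G z - y i)‖ ≤ ∑ i, T z i * ε := by
        refine Finset.sum_le_sum fun i _ => ?_
        rw [norm_smul, Real.norm_of_nonneg (hT0 z i)]
        by_cases hlt : ‖G z - y i‖ ≤ ε
        · exact mul_le_mul_of_nonneg_left hlt (hT0 z i)
        · have : T z i = 0 := by
            have : φ i z = 0 := max_eq_left (by linarith)
            simp [T, this]
          simp [this]
    _ = ε := by rw [← Finset.sum_mul, hT1, one_mul]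

lemma schauder {X : Type*} [NormedAddCommGroup X] [NormedSpace ℝ X]
    (C : Set X) (hC : Convex ℝ C) (hne : C.Nonempty) (Q : Set X)
    (hQ : IsCompact Q) (hQC : Q ⊆ C)
    (f : X → X) (hf : ContinuousOn f C) (hfQ : MapsTo f C Q) :
    ∃ x ∈ C, f x = x := by
  choose x hxC hx using fun n : ℕ => schauder_approx C hC hne Q hQ hQC f hf hfQ
    (1 / ((n:ℝ) + 1)) (by positivity)
  obtain ⟨z, hzQ, ψ, hψ, hlim⟩ := hQ.tendsto_subseq (fun n => hfQ (hxC n))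
  have h0 : Filter.Tendsto (fun n => f (x n) - x n) Filter.atTop (nhds 0) :=
    squeeze_zero_norm hx tendsto_one_div_add_atTop_nhds_zero_nat
  have hxl : Filter.Tendsto (fun n => x (ψ n)) Filter.atTop (nhds z) := by
    have := hlim.sub (h0.comp hψ.tendsto_atTop)
    simpa [Function.comp_def] using this
  have hzC := hQC hzQ
  refine ⟨z, hzC, ?_⟩
  have h3 : Filter.Tendsto (fun n => f (x (ψ n))) Filter.atTop (nhds (f z)) :=
    (hf z hzC).tendsto.comp (tendsto_nhdsWithin_iff.2
      ⟨hxl, Filter.Eventually.of_forall fun n => hxC _⟩)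
  exact tendsto_nhds_unique h3 hlim
end NS

open Set Filter Topology

theorem nehari_schaefer_fixed_point
    {X₁ X₂ : Type*}
    [NormedAddCommGroup X₁] [NormedSpace ℝ X₁] [CompleteSpace X₁]
    [NormedAddCommGroup X₂] [NormedSpace ℝ X₂] [CompleteSpace X₂]
    -- K₁ is a non-degenerate cone
    (K₁ : Set X₁) (hK₁closed : IsClosed K₁) (hK₁conv : Convex ℝ K₁)
    (hK₁cone : ∀ lam : ℝ, 0 ≤ lam → ∀ u ∈ K₁, lam • u ∈ K₁)
    (hK₁nondeg : ∃ u ∈ K₁, u ≠ 0)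
    -- the closed ball B_R of radius R > 0 centered at the origin of X₂
    (R : ℝ) (hR : 0 < R)
    -- T₁ : K₁ × X₂ → K₁ is completely continuous
    (T₁ : X₁ → X₂ → X₁)
    (hT₁maps : ∀ u ∈ K₁, ∀ v : X₂, T₁ u v ∈ K₁)
    (hT₁cont : ContinuousOn (fun p : X₁ × X₂ => T₁ p.1 p.2) (K₁ ×ˢ (Set.univ : Set X₂)))
    (hT₁compact : ∀ A ⊆ K₁ ×ˢ (Set.univ : Set X₂), Bornology.IsBounded A →
      IsCompact (closure ((fun p : X₁ × X₂ => T₁ p.1 p.2) '' A)))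
    -- T₂ : K₁ × B_R → X₂ is completely continuous
    (T₂ : X₁ → X₂ → X₂)
    (hT₂cont : ContinuousOn (fun p : X₁ × X₂ => T₂ p.1 p.2)
      (K₁ ×ˢ Metric.closedBall (0 : X₂) R))
    (hT₂compact : ∀ A ⊆ K₁ ×ˢ Metric.closedBall (0 : X₂) R, Bornology.IsBounded A →
      IsCompact (closure ((fun p : X₁ × X₂ => T₂ p.1 p.2) '' A)))
    -- the functional 𝓕 : K₁ × K₁ → ℝ, continuous, with 𝓕(λu,u)=0 ↔ λ=1
    (F : X₁ → X₁ → ℝ)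
    (hFcont : ContinuousOn (fun p : X₁ × X₁ => F p.1 p.2) (K₁ ×ˢ K₁))
    (hF : ∀ u ∈ K₁, u ≠ 0 → ∀ lam : ℝ, 0 < lam → (F (lam • u) u = 0 ↔ lam = 1))
    -- condition (a1): T₂(K₁ × B_R) is bounded in X₂
    (a1 : Bornology.IsBounded
      ((fun p : X₁ × X₂ => T₂ p.1 p.2) '' (K₁ ×ˢ Metric.closedBall (0 : X₂) R)))
    -- condition (a2): s(u,v) is the unique positive zero
    (s : X₁ → X₂ → ℝ)
    (a2 : ∀ u ∈ K₁, u ≠ 0 → ∀ v ∈ Metric.closedBall (0 : X₂) R,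
      0 < s u v ∧ F (T₁ (s u v • u) v) (s u v • u) = 0 ∧
      ∀ σ : ℝ, 0 < σ → F (T₁ (σ • u) v) (σ • u) = 0 → σ = s u v)
    -- condition (a3): m < s < M on the unit sphere of the cone, times B_R
    (m M : ℝ) (hm : 0 < m) (hmM : m < M)
    (a3 : ∀ u ∈ K₁, ‖u‖ = 1 → ∀ v ∈ Metric.closedBall (0 : X₂) R,
      m < s u v ∧ s u v < M)
    -- the Leray–Schauder boundary condition
    (hLS : ∀ u ∈ K₁, ∀ v : X₂, ‖v‖ = R →
      ∀ lam : ℝ, 0 < lam → lam < 1 → v ≠ lam • T₂ u v) :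
    ∃ u ∈ K₁, ∃ v ∈ Metric.closedBall (0 : X₂) R, T₁ u v = u ∧ T₂ u v = v := by
  classical
  set B := Metric.closedBall (0 : X₂) R with hB
  -- homogeneity of `s`
  have hs : ∀ u ∈ K₁, u ≠ 0 → ∀ v ∈ B, m < s u v * ‖u‖ ∧ s u v * ‖u‖ < M := by
    intro u hu hu0 v hv
    have hn : 0 < ‖u‖ := norm_pos_iff.2 hu0
    have hwK : ‖u‖⁻¹ • u ∈ K₁ := hK₁cone _ (by positivity) u hu
    have hwn : ‖‖u‖⁻¹ • u‖ = 1 := by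
      rw [norm_smul, norm_inv, norm_norm, inv_mul_cancel₀ hn.ne']
    have hw0 : ‖u‖⁻¹ • u ≠ 0 := by
      intro h; rw [h] at hwn; simp at hwn
    obtain ⟨p1, p2, -⟩ := a2 _ hwK hw0 v hv
    have h3 := a3 _ hwK hwn v hv
    have h4 := (a2 u hu hu0 v hv).2.2 (s (‖u‖⁻¹ • u) v * ‖u‖⁻¹) (by positivity)
      (by rw [mul_smul]; exact p2)
    have h5 : s u v * ‖u‖ = s (‖u‖⁻¹ • u) v := by
      rw [← h4, mul_assoc, inv_mul_cancel₀ hn.ne', mul_one]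
    rw [h5]; exact h3
  -- continuity of `s`
  have hscont : ∀ u ∈ K₁, u ≠ 0 → ∀ v ∈ B,
      Tendsto (fun p : X₁ × X₂ => s p.1 p.2) (𝓝[K₁ ×ˢ B] (u, v)) (𝓝 (s u v)) := by
    intro u hu hu0 v hv
    have hn : 0 < ‖u‖ := norm_pos_iff.2 hu0
    have hnt : Tendsto (fun p : X₁ × X₂ => ‖p.1‖) (𝓝[K₁ ×ˢ B] (u, v)) (𝓝 ‖u‖) :=
      (continuous_fst.norm.tendsto (u, v)).mono_left nhdsWithin_le_nhds
    have hev1 : ∀ᶠ p : X₁ × X₂ in 𝓝[K₁ ×ˢ B] (u, v), ‖u‖ / 2 < ‖p.1‖ ∧ ‖p.1‖ < 2 * ‖u‖ :=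
      hnt.eventually (Ioo_mem_nhds (by linarith) (by linarith))
    have hev2 : ∀ᶠ p : X₁ × X₂ in 𝓝[K₁ ×ˢ B] (u, v), p ∈ K₁ ×ˢ B := self_mem_nhdsWithin
    refine (isCompact_Icc (a := m / (2 * ‖u‖)) (b := M / (‖u‖ / 2))).tendsto_nhds_of_unique_mapClusterPt
      ?_ ?_
    · filter_upwards [hev1, hev2] with p hp hpK
      have hp0 : p.1 ≠ 0 := norm_pos_iff.1 (by linarith [hp.1])
      obtain ⟨b1, b2⟩ := hs p.1 hpK.1 hp0 p.2 hpK.2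
      have hsp := (a2 p.1 hpK.1 hp0 p.2 hpK.2).1
      constructor
      · rw [div_le_iff₀ (by positivity)]; nlinarith
      · rw [le_div_iff₀ (by positivity)]; nlinarith
    · intro σ hσ hcl
      have hσp : 0 < σ := lt_of_lt_of_le (by positivity) hσ.1
      obtain ⟨U, hU, hUs⟩ := mapClusterPt_iff_ultrafilter.1 hcl
      refine (a2 u hu hu0 v hv).2.2 σ hσp ?_
      have hUid : Tendsto (fun p : X₁ × X₂ => p) U (𝓝 (u, v)) :=
        hU.trans nhdsWithin_le_nhds
      have hU1 : Tendsto (fun p : X₁ × X₂ => p.1) U (𝓝 u) :=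
        (continuous_fst.tendsto (u, v)).comp hUid
      have hU2 : Tendsto (fun p : X₁ × X₂ => p.2) U (𝓝 v) :=
        (continuous_snd.tendsto (u, v)).comp hUid
      have e2 : ∀ᶠ p in (U : Filter (X₁ × X₂)), p ∈ K₁ ×ˢ B := hU hev2
      have e1 : ∀ᶠ p in (U : Filter (X₁ × X₂)), ‖u‖ / 2 < ‖p.1‖ ∧ ‖p.1‖ < 2 * ‖u‖ := hU hev1
      have e3 : ∀ᶠ p in (U : Filter (X₁ × X₂)), 0 < s p.1 p.2 := by
        filter_upwards [e1, e2] with p hp hpK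
        exact (a2 p.1 hpK.1 (norm_pos_iff.1 (by linarith [hp.1])) p.2 hpK.2).1
      have t1 : Tendsto (fun p : X₁ × X₂ => s p.1 p.2 • p.1) U (𝓝 (σ • u)) := hUs.smul hU1
      have t1K : ∀ᶠ p in (U : Filter (X₁ × X₂)), s p.1 p.2 • p.1 ∈ K₁ := by
        filter_upwards [e2, e3] with p hpK hp
        exact hK₁cone _ hp.le _ hpK.1
      have hσuK : σ • u ∈ K₁ := hK₁cone _ hσp.le _ hu
      have t2 : Tendsto (fun p : X₁ × X₂ => T₁ (s p.1 p.2 • p.1) p.2) U (𝓝 (T₁ (σ • u) v)) := by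
        refine (hT₁cont (σ • u, v) ⟨hσuK, mem_univ _⟩).tendsto.comp
          (f := fun p : X₁ × X₂ => (s p.1 p.2 • p.1, p.2)) (tendsto_nhdsWithin_iff.2 ⟨t1.prodMk_nhds hU2, ?_⟩)
        filter_upwards [t1K] with p hp using ⟨hp, mem_univ _⟩
      have t3 : Tendsto (fun p : X₁ × X₂ => F (T₁ (s p.1 p.2 • p.1) p.2) (s p.1 p.2 • p.1)) U
          (𝓝 (F (T₁ (σ • u) v) (σ • u))) := by
        refine (hFcont (T₁ (σ • u) v, σ • u) ⟨hT₁maps _ hσuK _, hσuK⟩).tendsto.comp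
          (f := fun p : X₁ × X₂ => (T₁ (s p.1 p.2 • p.1) p.2, s p.1 p.2 • p.1))
          (tendsto_nhdsWithin_iff.2 ⟨t2.prodMk_nhds t1, ?_⟩)
        filter_upwards [t1K] with p hp using ⟨hT₁maps _ hp _, hp⟩
      have t4 : Tendsto (fun p : X₁ × X₂ => F (T₁ (s p.1 p.2 • p.1) p.2) (s p.1 p.2 • p.1)) U
          (𝓝 0) := by
        refine tendsto_const_nhds.congr' ?_
        filter_upwards [e1, e2] with p hp hpK
        exact (a2 p.1 hpK.1 (norm_pos_iff.1 (by linarith [hp.1])) p.2 hpK.2).2.1.symm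
      exact tendsto_nhds_unique t3 t4
  -- the retraction
  let r : X₁ × X₂ → X₁ := fun p => min 1 (s p.1 p.2) • p.1
  have hr0 : ∀ p ∈ K₁ ×ˢ B, r p ∈ K₁ ∧ ‖r p‖ ≤ ‖p.1‖ ∧ ‖r p‖ ≤ M := by
    intro p hp
    by_cases h0 : p.1 = 0
    · have h1 : r p = 0 := by simp [r, h0]
      rw [h1, h0]
      refine ⟨?_, by simp, by simp; linarith⟩
      have := hp.1; rwa [h0] at this
    · obtain ⟨b1, b2⟩ := hs p.1 hp.1 h0 p.2 hp.2
      have hsp := (a2 p.1 hp.1 h0 p.2 hp.2).1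
      have hmn : 0 ≤ min 1 (s p.1 p.2) := le_min zero_le_one hsp.le
      refine ⟨hK₁cone _ hmn _ hp.1, ?_, ?_⟩
      · simp only [r]
        rw [norm_smul, Real.norm_of_nonneg hmn]
        exact mul_le_of_le_one_left (norm_nonneg _) (min_le_left _ _)
      · simp only [r]
        rw [norm_smul, Real.norm_of_nonneg hmn]
        exact (mul_le_mul_of_nonneg_right (min_le_right _ _) (norm_nonneg _)).trans b2.le
  have hrc : ContinuousOn r (K₁ ×ˢ B) := by
    rintro ⟨u, v⟩ hp
    by_cases h0 : u = 0
    · subst h0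
      have h1 : r (0, v) = 0 := by simp [r]
      rw [ContinuousWithinAt, h1]
      refine squeeze_zero_norm' (a := fun p : X₁ × X₂ => ‖p.1‖) ?_ ?_
      · filter_upwards [self_mem_nhdsWithin] with p hp using (hr0 p hp).2.1
      · have := (continuous_fst.norm.tendsto ((0:X₁), v)).mono_left
          (nhdsWithin_le_nhds (s := K₁ ×ˢ B))
        simpa using this
    · exact (tendsto_const_nhds.min (hscont u hp.1 h0 v hp.2)).smul
        ((continuous_fst.tendsto (u, v)).mono_left nhdsWithin_le_nhds)
  let ρ : X₂ → X₂ := fun v => (R / max R ‖v‖) • v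
  have hmx : ∀ v : X₂, 0 < max R ‖v‖ := fun v => lt_max_of_lt_left hR
  have hρc : Continuous ρ :=
    (continuous_const.div (by fun_prop) (fun v => (hmx v).ne')).smul continuous_id
  have hρB : ∀ v, ρ v ∈ B := by
    intro v
    have := hmx v
    simp only [hB, mem_closedBall_zero_iff, ρ]
    rw [norm_smul, Real.norm_of_nonneg (by positivity), div_mul_eq_mul_div, div_le_iff₀ this]
    exact mul_le_mul_of_nonneg_left (le_max_right _ _) hR.le
  let A : Set (X₁ × X₂) := (K₁ ∩ Metric.closedBall 0 M) ×ˢ B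
  have hAK : A ⊆ K₁ ×ˢ B := prod_mono inter_subset_left subset_rfl
  have hAb : Bornology.IsBounded A :=
    (Metric.isBounded_closedBall.subset inter_subset_right).prod Metric.isBounded_closedBall
  have c1 := hT₁compact A (hAK.trans (prod_mono subset_rfl (subset_univ _))) hAb
  have c2 := hT₂compact A hAK hAb
  let j : X₁ × X₂ → X₁ × X₂ := fun p => (r (p.1, ρ p.2), ρ p.2)
  have hjA : ∀ p ∈ K₁ ×ˢ (univ : Set X₂), j p ∈ A := by
    intro p hp
    have := hr0 (p.1, ρ p.2) ⟨hp.1, hρB _⟩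
    exact ⟨⟨this.1, by simpa using this.2.2⟩, hρB _⟩
  have hjc : ContinuousOn j (K₁ ×ˢ (univ : Set X₂)) := by
    have hg : Continuous (fun p : X₁ × X₂ => (p.1, ρ p.2)) := by fun_prop
    refine ContinuousOn.prodMk ?_ (by fun_prop)
    exact hrc.comp hg.continuousOn (fun p hp => ⟨hp.1, hρB _⟩)
  obtain ⟨⟨u, v⟩, hp, hfix⟩ := NS.schauder (K₁ ×ˢ (univ : Set X₂))
    (hK₁conv.prod convex_univ) (hK₁nondeg.elim fun u hu => ⟨(u, 0), hu.1, mem_univ _⟩)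
    _ (c1.prod c2) (by
      refine prod_mono (closure_minimal ?_ hK₁closed) (subset_univ _)
      rintro _ ⟨p, hp, rfl⟩
      exact hT₁maps _ hp.1.1 _)
    (fun p => (T₁ (j p).1 (j p).2, T₂ (j p).1 (j p).2))
    ((hT₁cont.comp hjc fun p hp => ⟨(hAK (hjA p hp)).1, mem_univ _⟩).prodMk
      (hT₂cont.comp hjc fun p hp => hAK (hjA p hp)))
    (fun p hp => ⟨subset_closure ⟨_, hjA p hp, rfl⟩, subset_closure ⟨_, hjA p hp, rfl⟩⟩)
  obtain ⟨f1, f2⟩ := Prod.mk.inj hfix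
  have hu : u ∈ K₁ := hp.1
  have hjuv := hjA (u, v) hp
  have hvR : ‖v‖ ≤ R := by
    by_contra! hv
    have hv0 : 0 < ‖v‖ := hR.trans hv
    have e : ρ v = (R / ‖v‖) • v := by simp only [ρ, max_eq_right hv.le]
    refine hLS (j (u, v)).1 hjuv.1.1 (ρ v) ?_ (R / ‖v‖) (by positivity)
      ((div_lt_one hv0).2 hv) ?_
    · rw [e, norm_smul, Real.norm_of_nonneg (by positivity), div_mul_cancel₀ _ hv0.ne']
    · have f2' : T₂ (j (u, v)).1 (ρ v) = v := f2
      rw [f2', e]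
  have hρv : ρ v = v := by
    simp only [ρ, max_eq_left hvR, div_self hR.ne', one_smul]
  have hvB : v ∈ B := by simpa [hB] using hvR
  simp only [j, hρv] at f1 f2
  have hru : r (u, v) = u := by
    by_cases h0 : u = 0
    · simp [r, h0]
    · by_cases h1 : 1 ≤ s u v
      · simp [r, h1]
      · exfalso
        push Not at h1
        obtain ⟨p1, p2, -⟩ := a2 u hu h0 v hvB
        have e : r (u, v) = s u v • u := by simp only [r, min_eq_right h1.le]
        rw [e] at f1
        rw [f1] at p2
        have hw0 : s u v • u ≠ 0 := smul_ne_zero p1.ne' h0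
        have := (hF (s u v • u) (hK₁cone _ p1.le _ hu) hw0 (s u v)⁻¹ (by positivity)).1
          (by rw [inv_smul_smul₀ p1.ne']; exact p2)
        rw [inv_eq_one] at this
        linarith
  rw [hru] at f1 f2
  exact ⟨u, hu, v, hvB, f1, f2⟩
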